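/- Let x be an edge-to-edge rhombus tiling of ℝ² with finitely many shapes up to translation, and let u be an edge direction such that the shape-uniform recurrence holds for some rhombus with edge direction u (so that every disk of a fixed radius R in x meets a chain of normal vector u). Then the chains of normal vector u in x can be indexed by ℤ in such a way that, starting from any point of the plane and moving along the direction u, one crosses the u-chains in increasing order of index, and one crosses arbitrarily many u-chains in both the u and −u directions. -/

import Mathlib

open Set Metric

noncomputable section

/-- Points of the euclidean plane. -/
abbrev Pt : Type := EuclideanSpace ℝ (Fin 2)

/-- A rhombus tile in the plane, given by a position (a distinguished vertex)
and its two edge vectors. -/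
structure Rhombus where
  pos : Pt
  u : Pt
  v : Pt

namespace Rhombus

/-- A genuine rhombus: linearly independent edge vectors of equal euclidean length. -/
def IsValid (r : Rhombus) : Prop :=
  LinearIndependent ℝ ![r.u, r.v] ∧ ‖r.u‖ = ‖r.v‖

/-- The support of a rhombus: the closed parallelogram it spans. -/
def support (r : Rhombus) : Set Pt :=
  {x | ∃ s t : ℝ, s ∈ Icc (0 : ℝ) 1 ∧ t ∈ Icc (0 : ℝ) 1 ∧ x = r.pos + s • r.u + t • r.v}

/-- The four vertices of a rhombus. -/
def vertices (r : Rhombus) : Set Pt :=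
  {r.pos, r.pos + r.u, r.pos + r.v, r.pos + r.u + r.v}

/-- The four (closed) edges of a rhombus, indexed as in the paper:
edge `0` from `pos` to `pos + u`, edge `1` from `pos + u` to `pos + u + v`,
edge `2` from `pos + u + v` to `pos + v`, edge `3` from `pos + v` to `pos`. -/
def edge (r : Rhombus) : Fin 4 → Set Pt :=
  ![segment ℝ r.pos (r.pos + r.u),
    segment ℝ (r.pos + r.u) (r.pos + r.u + r.v),
    segment ℝ (r.pos + r.u + r.v) (r.pos + r.v),
    segment ℝ (r.pos + r.v) r.pos]

/-- The set of edges of a rhombus. -/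
def edges (r : Rhombus) : Set (Set Pt) := Set.range r.edge

/-- Translation of a rhombus by a vector. -/
def translate (r : Rhombus) (w : Pt) : Rhombus := ⟨r.pos + w, r.u, r.v⟩

/-- The center of a rhombus. -/
def center (r : Rhombus) : Pt := r.pos + (2⁻¹ : ℝ) • r.u + (2⁻¹ : ℝ) • r.v

/-- Two rhombi are translates of each other (same shape up to translation). -/
def SameShape (r s : Rhombus) : Prop := r.u = s.u ∧ r.v = s.v

/-- `w` is one of the two edge directions of `r` (up to sign). -/
def HasEdgeDir (r : Rhombus) (w : Pt) : Prop :=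
  r.u = w ∨ r.u = -w ∨ r.v = w ∨ r.v = -w

end Rhombus

/-- Two rhombi are in edge-to-edge position: they are disjoint, share exactly one
common vertex, or share exactly one full common edge. -/
def EdgeToEdgePair (r s : Rhombus) : Prop :=
  r.support ∩ s.support = ∅ ∨
  (∃ p, p ∈ r.vertices ∧ p ∈ s.vertices ∧ r.support ∩ s.support = {p}) ∨
  (∃ e, e ∈ r.edges ∧ e ∈ s.edges ∧ r.support ∩ s.support = e)

/-- An edge-to-edge rhombus tiling of the plane: a covering of the plane
without overlap where any two tiles are disjoint, share exactly one vertex or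
share a full common edge. -/
def IsTiling (x : Set Rhombus) : Prop :=
  (∀ r ∈ x, r.IsValid) ∧
  (⋃ r ∈ x, r.support) = univ ∧
  ∀ r ∈ x, ∀ s ∈ x, r ≠ s → EdgeToEdgePair r s

/-- Every tile of `x` is a translate of a shape of the shapeset `T`. -/
def UsesShapes (T : Set Rhombus) (x : Set Rhombus) : Prop :=
  ∀ r ∈ x, ∃ s ∈ T, r.SameShape s

/-- An edge-to-edge tiling whose tiles are translates of shapes of `T`. -/
def IsTilingOn (T : Set Rhombus) (x : Set Rhombus) : Prop :=
  IsTiling x ∧ UsesShapes T x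

/-- Support of a patch. -/
def PatchSupport (P : Set Rhombus) : Set Pt := ⋃ r ∈ P, r.support

/-- A patch: a finite nonempty edge-to-edge set of rhombi whose support is
simply connected (no holes). -/
def IsPatch (P : Set Rhombus) : Prop :=
  P.Finite ∧ P.Nonempty ∧ (∀ r ∈ P, r.IsValid) ∧
  (∀ r ∈ P, ∀ s ∈ P, r ≠ s → EdgeToEdgePair r s) ∧
  SimplyConnectedSpace (PatchSupport P)

/-- Translation of a set of rhombi. -/
def translatePatch (P : Set Rhombus) (w : Pt) : Set Rhombus :=
  (fun r => r.translate w) '' P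

/-- The pattern `f` appears in `x`: some translate of `f` is a sub-collection of `x`. -/
def Appears (f : Set Rhombus) (x : Set Rhombus) : Prop :=
  ∃ w : Pt, translatePatch f w ⊆ x

/-- Vertices of a patch. -/
def PatchVertices (P : Set Rhombus) : Set Pt := ⋃ r ∈ P, r.vertices

/-- The support of `P` contains a disk of radius `ρ` centered at a vertex of `P`. -/
def HasRadius (P : Set Rhombus) (ρ : ℝ) : Prop :=
  ∃ c ∈ PatchVertices P, closedBall c ρ ⊆ PatchSupport P

/-- `P` has minimal radius `ρ`: its support contains a disk of radius `ρ` centered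
at one of its vertices, and removing any tile breaks this property. -/
def MinimalRadius (P : Set Rhombus) (ρ : ℝ) : Prop :=
  HasRadius P ρ ∧ ∀ r ∈ P, ¬ HasRadius (P \ {r}) ρ

/-- A rhombus Wang tile: a rhombus with a colour (a natural number) on each edge. -/
structure ColoredRhombus where
  shape : Rhombus
  color : Fin 4 → ℕ

namespace ColoredRhombus

def translate (t : ColoredRhombus) (w : Pt) : ColoredRhombus :=
  ⟨t.shape.translate w, t.color⟩

/-- Two coloured tiles are equal up to translation. -/
def SameTile (t s : ColoredRhombus) : Prop :=
  t.shape.SameShape s.shape ∧ t.color = s.color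

end ColoredRhombus

/-- The colour-erasing operator `π`. -/
def eraseColors (x : Set ColoredRhombus) : Set Rhombus := ColoredRhombus.shape '' x

def translateColoredPatch (P : Set ColoredRhombus) (w : Pt) : Set ColoredRhombus :=
  (fun t => t.translate w) '' P

/-- Any two tiles sharing an edge carry the same colour on the shared edge. -/
def ColorMatching (x : Set ColoredRhombus) : Prop :=
  ∀ t ∈ x, ∀ s ∈ x, t.shape ≠ s.shape →
    ∀ i j : Fin 4, t.shape.edge i = s.shape.edge j → t.color i = s.color j

/-- No two distinct coloured tiles occupy the same rhombus. -/
def ShapeInjective (x : Set ColoredRhombus) : Prop :=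
  ∀ t ∈ x, ∀ s ∈ x, t.shape = s.shape → t = s

/-- A valid tiling by rhombus Wang tiles. -/
def IsColoredTiling (x : Set ColoredRhombus) : Prop :=
  IsTiling (eraseColors x) ∧ ShapeInjective x ∧ ColorMatching x

/-- A valid patch of rhombus Wang tiles. -/
def IsColoredPatch (x : Set ColoredRhombus) : Prop :=
  IsPatch (eraseColors x) ∧ ShapeInjective x ∧ ColorMatching x

/-- All tiles of `x` are translates of tiles of the tileset `T`. -/
def TilesFrom (T : Set ColoredRhombus) (x : Set ColoredRhombus) : Prop :=
  ∀ t ∈ x, ∃ s ∈ T, t.SameTile s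

/-- A subshift on the shapeset `T`: a set of `T`-tilings that is invariant under
translation and closed for the tiling topology (a tiling all of whose finite
patterns appear in tilings of `X` belongs to `X`). -/
def IsSubshift (T : Set Rhombus) (X : Set (Set Rhombus)) : Prop :=
  (∀ x ∈ X, IsTilingOn T x) ∧
  (∀ x ∈ X, ∀ w : Pt, translatePatch x w ∈ X) ∧
  (∀ x, IsTilingOn T x →
    (∀ P, P ⊆ x → P.Finite → P.Nonempty → ∃ y ∈ X, Appears P y) → x ∈ X)

/-- The shape `r` is uniformly recurrent in the tiling `x`: for some `R > 0`,
every disk of radius `R` contains an occurrence (a translate) of `r`. -/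
def UniformlyRecurrentIn (r : Rhombus) (x : Set Rhombus) : Prop :=
  ∃ R : ℝ, 0 < R ∧ ∀ p : Pt, ∃ s ∈ x, s.SameShape r ∧ s.support ⊆ closedBall p R

/-- A shape uniformly recurrent subshift: every shape appearing somewhere in `X`
is uniformly recurrent in every tiling of `X`. -/
def ShapeUniformlyRecurrent (X : Set (Set Rhombus)) : Prop :=
  ∀ r : Rhombus, (∃ y ∈ X, ∃ s ∈ y, s.SameShape r) →
    ∀ x ∈ X, UniformlyRecurrentIn r x

/-- The restriction of `X` to the tilings using only shapes of `T'`. -/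
def restrictShapes (T' : Set Rhombus) (X : Set (Set Rhombus)) : Set (Set Rhombus) :=
  {x ∈ X | UsesShapes T' x}

/-- The subshift on `T` defined by the sequence `F` of forbidden patterns. -/
def SubshiftOfForbidden (T : Set Rhombus) (F : ℕ → Set Rhombus) : Set (Set Rhombus) :=
  {x | IsTilingOn T x ∧ ∀ n : ℕ, ¬ Appears (F n) x}

/-- A chain of rhombuses of normal vector `w` in the tiling `x`: a bi-infinite
sequence of tiles in which any two consecutive tiles share a full common edge of
direction `w`, the chain crossing each of its tiles from one of its two
`w`-edges to the other one. -/
structure Chain (x : Set Rhombus) (w : Pt) where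
  seq : ℤ → Rhombus
  mem : ∀ n : ℤ, seq n ∈ x
  shares : ∀ n : ℤ, ∃ a : Pt,
    segment ℝ a (a + w) ∈ (seq n).edges ∧
    segment ℝ a (a + w) ∈ (seq (n + 1)).edges ∧
    (seq n).support ∩ (seq (n + 1)).support = segment ℝ a (a + w)
  progress : ∀ n : ℤ,
    (seq (n - 1)).support ∩ (seq n).support ≠ (seq n).support ∩ (seq (n + 1)).support

/-- The set of tiles of a chain. -/
def Chain.tiles {x : Set Rhombus} {w : Pt} (c : Chain x w) : Set Rhombus :=
  Set.range c.seq

/-- `C` is the set of tiles of some chain of normal vector `w` in `x`. -/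
def IsChainSet (x : Set Rhombus) (w : Pt) (C : Set Rhombus) : Prop :=
  ∃ c : Chain x w, C = c.tiles

/-- The support of a set of tiles. -/
def ChainSupp (C : Set Rhombus) : Set Pt := ⋃ r ∈ C, r.support

/-!
In a linear chart of the plane in which `u` is the horizontal unit vector, a tile with edge
direction `u` is spanned by `u` and an upward vector. The tiles of a `u`-chain stack along these
vectors, so the chain fills the strip of horizontal width one to the right of a Lipschitz graph
(finitely many shapes bound the slopes). Distinct chains share no tile, so their strips have
disjoint interiors and their graphs stay at distance at least one: the graphs never cross and the
chains are ordered by their intersection with any one horizontal line. Relative density of the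
tiles with edge direction `u` makes these intersections unbounded on both sides, and an unbounded
set of reals with gaps at least one is ordered like `ℤ`.
-/

section IntegerIndexing

/-- Sending `i` to `⌊g i⌋` reduces the claim to unbounded sets of integers. -/
theorem exists_equiv_int_of_one_le_abs_sub {ι : Type*} {g : ι → ℝ}
    (hsep : ∀ i j, i ≠ j → 1 ≤ |g i - g j|) (habove : ¬BddAbove (range g))
    (hbelow : ¬BddBelow (range g)) : ∃ e : ι ≃ ℤ, ∀ i j, e i < e j ↔ g i < g j := by
  have hfloor : Function.Injective fun i => ⌊g i⌋ := fun i j h => by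
    by_contra hne
    exact (hsep i j hne).not_gt (Int.abs_sub_lt_one_of_floor_eq_floor h)
  have hlt : ∀ i j, ⌊g i⌋ < ⌊g j⌋ ↔ g i < g j := fun i j => by
    refine ⟨fun h => Int.floor_mono.reflect_lt h, fun h => ?_⟩
    exact (Int.floor_mono h.le).lt_of_ne fun heq => h.ne (congrArg g (hfloor heq))
  rw [not_bddAbove_iff] at habove
  rw [not_bddBelow_iff] at hbelow
  let S : Set ℤ := range fun i => ⌊g i⌋
  have : NoMaxOrder S := ⟨by
    rintro ⟨_, i, rfl⟩
    obtain ⟨_, ⟨j, rfl⟩, hij⟩ := habove (g i)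
    exact ⟨⟨_, j, rfl⟩, (hlt i j).2 hij⟩⟩
  have : NoMinOrder S := ⟨by
    rintro ⟨_, i, rfl⟩
    obtain ⟨_, ⟨j, rfl⟩, hij⟩ := hbelow (g i)
    exact ⟨⟨_, j, rfl⟩, (hlt j i).2 hij⟩⟩
  obtain ⟨_, ⟨i₀, rfl⟩, -⟩ := habove 0
  have : Nonempty S := ⟨⟨_, i₀, rfl⟩⟩
  classical
  let _ : LocallyFiniteOrder S := inferInstance
  let _ : SuccOrder S := LinearLocallyFiniteOrder.succOrder S
  let _ : PredOrder S := LinearLocallyFiniteOrder.predOrder S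
  let o : S ≃o ℤ := orderIsoIntOfLinearSuccPredArch
  refine ⟨(Equiv.ofInjective _ hfloor).trans o.toEquiv, fun i j => ?_⟩
  exact o.lt_iff_lt.trans (hlt i j)

theorem lt_of_continuous_of_ne {X α : Type*} [TopologicalSpace X] [PreconnectedSpace X]
    [LinearOrder α] [TopologicalSpace α] [OrderClosedTopology α] {f g : X → α}
    (hf : Continuous f) (hg : Continuous g) (hne : ∀ x, f x ≠ g x) {a : X} (ha : f a < g a)
    (b : X) : f b < g b := by
  by_contra! hb
  obtain ⟨x, hx⟩ := intermediate_value_univ₂ hf hg ha.le hb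
  exact hne x hx

end IntegerIndexing

section Walks

variable {α : Type*} {N : Equiv.Perm α} {t : ℤ → α}

theorem range_eq_setOf_sameCycle (ht : ∀ n, t (n + 1) = N (t n)) :
    range t = {s | N.SameCycle (t 0) s} := by
  have hpow : ∀ n, t n = (N ^ n) (t 0) := fun n => by
    induction n with
    | zero => rfl
    | succ n ih => rw [ht, ih, add_comm, zpow_one_add, Equiv.Perm.mul_apply]
    | pred n ih =>
      apply N.injective
      rw [← ht, ← Equiv.Perm.mul_apply, ← zpow_one_add, sub_add_cancel, add_sub_cancel, ih]
  ext s
  exact exists_congr fun n => by rw [hpow n]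

theorem forward_or_backward_of_ne (hstep : ∀ n, t (n + 1) = N (t n) ∨ t n = N (t (n + 1)))
    (hne : ∀ n, t n ≠ t (n + 2)) :
    (∀ n, t (n + 1) = N (t n)) ∨ ∀ n, t n = N (t (n + 1)) := by
  have hiff : ∀ n, t (n + 1) = N (t n) ↔ t (n + 1 + 1) = N (t (n + 1)) := fun n => by
    have hn : t n ≠ t (n + 1 + 1) := by simpa only [add_assoc, one_add_one_eq_two] using hne n
    constructor <;> intro h
    · exact (hstep (n + 1)).resolve_right fun h' => hn (N.injective (h ▸ h'))
    · exact (hstep n).resolve_right fun h' => hn (h'.trans h.symm)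
  have hall : ∀ n, t (n + 1) = N (t n) ↔ t (0 + 1) = N (t 0) := fun n => by
    induction n with
    | zero => rfl
    | succ n ih => exact (hiff n).symm.trans ih
    | pred n ih =>
      have hpred := hiff (-n - 1)
      rw [sub_add_cancel] at hpred ⊢
      exact hpred.trans ih
  by_cases h₀ : t (0 + 1) = N (t 0)
  · exact .inl fun n => (hall n).2 h₀
  · exact .inr fun n => (hstep n).resolve_left fun h => h₀ ((hall n).1 h)

theorem range_eq_setOf_sameCycle_of_ne
    (hstep : ∀ n, t (n + 1) = N (t n) ∨ t n = N (t (n + 1))) (hne : ∀ n, t n ≠ t (n + 2)) :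
    range t = {s | N.SameCycle (t 0) s} := by
  rcases forward_or_backward_of_ne hstep hne with h | h
  · exact range_eq_setOf_sameCycle h
  · have hneg : range (t ∘ Neg.neg) = {s | N.SameCycle ((t ∘ Neg.neg) 0) s} :=
      range_eq_setOf_sameCycle fun n => by simpa using h (-(n + 1))
    rwa [neg_surjective.range_comp] at hneg

end Walks

theorem eq_and_eq_or_of_segment_eq {𝕜 E : Type*} [Field 𝕜] [LinearOrder 𝕜] [IsStrictOrderedRing 𝕜]
    [AddCommGroup E] [Module 𝕜 E] {a b c d : E} (h : segment 𝕜 a b = segment 𝕜 c d) :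
    a = c ∧ b = d ∨ a = d ∧ b = c := by
  have hacd : Wbtw 𝕜 c a d := mem_segment_iff_wbtw.1 (h ▸ left_mem_segment 𝕜 a b)
  have hbcd : Wbtw 𝕜 c b d := mem_segment_iff_wbtw.1 (h ▸ right_mem_segment 𝕜 a b)
  have hcab : Wbtw 𝕜 a c b := mem_segment_iff_wbtw.1 (h ▸ left_mem_segment 𝕜 c d)
  have hdab : Wbtw 𝕜 a d b := mem_segment_iff_wbtw.1 (h ▸ right_mem_segment 𝕜 c d)
  have htotal : Wbtw 𝕜 a c d ∨ Wbtw 𝕜 a d c := by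
    obtain ⟨s, hs, rfl⟩ := hcab
    obtain ⟨t, ht, rfl⟩ := hdab
    exact wbtw_or_wbtw_smul_vadd_of_nonneg a (b -ᵥ a) hs.1 ht.1
  rcases htotal with hacd' | hadc'
  · obtain rfl := (wbtw_swap_left_iff 𝕜 d).1 ⟨hacd', hacd⟩
    exact .inl ⟨rfl, (wbtw_swap_right_iff 𝕜 _).1 ⟨hbcd, hdab⟩⟩
  · obtain rfl := (wbtw_swap_left_iff 𝕜 c).1 ⟨hadc', hacd.symm⟩
    exact .inr ⟨rfl, (wbtw_swap_right_iff 𝕜 _).1 ⟨hbcd.symm, hcab⟩⟩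

section Polyline

variable {K : NNReal} {A : ℤ → ℝ × ℝ}

/-- `q` lies in the upward cone of apex `p` and slope `K`, the second coordinate being the height. A
set that is totally ordered by this relation is contained in the graph of a Lipschitz function. -/
def ConeLE (K : NNReal) (p q : ℝ × ℝ) : Prop :=
  |q.1 - p.1| ≤ K * (q.2 - p.2)

instance : IsTrans (ℝ × ℝ) (ConeLE K) where
  trans p q r hpq hqr := by
    unfold ConeLE at *
    linarith [abs_sub_le r.1 q.1 p.1]

theorem ConeLE.lineMap {p q : ℝ × ℝ} (h : ConeLE K p q) {s t : ℝ} (hst : s ≤ t) :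
    ConeLE K (AffineMap.lineMap p q s) (AffineMap.lineMap p q t) := by
  have hsub : AffineMap.lineMap p q t - AffineMap.lineMap p q s = (t - s) • (q - p) := by
    simp only [AffineMap.lineMap_apply_module]
    module
  rw [ConeLE, ← Prod.fst_sub, ← Prod.snd_sub, hsub, Prod.smul_fst, Prod.smul_snd, smul_eq_mul,
    smul_eq_mul, abs_mul, abs_of_nonneg (sub_nonneg.2 hst), mul_left_comm]
  exact mul_le_mul_of_nonneg_left h (sub_nonneg.2 hst)

theorem ConeLE.total_of_mem_polyline (hA : ∀ n, ConeLE K (A n) (A (n + 1))) {p q : ℝ × ℝ}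
    (hp : p ∈ ⋃ n, segment ℝ (A n) (A (n + 1))) (hq : q ∈ ⋃ n, segment ℝ (A n) (A (n + 1))) :
    ConeLE K p q ∨ ConeLE K q p := by
  simp only [mem_iUnion, segment_eq_image_lineMap] at hp hq
  obtain ⟨m, s, hs, rfl⟩ := hp
  obtain ⟨n, t, ht, rfl⟩ := hq
  wlog hmn : m ≤ n generalizing m n s t
  · exact (this n t ht m s hs (le_of_not_ge hmn)).symm
  rcases hmn.eq_or_lt with rfl | hmn
  · exact (le_total s t).imp (hA m).lineMap (hA m).lineMap
  · have hleft : ConeLE K (AffineMap.lineMap (A m) (A (m + 1)) s) (A (m + 1)) := by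
      simpa only [AffineMap.lineMap_apply_one] using (hA m).lineMap hs.2
    have hright : ConeLE K (A n) (AffineMap.lineMap (A n) (A (n + 1)) t) := by
      simpa only [AffineMap.lineMap_apply_zero] using (hA n).lineMap ht.1
    rcases (Int.add_one_le_of_lt hmn).eq_or_lt with rfl | hmn
    · exact .inl (_root_.trans hleft hright)
    · have hmid := Int.rel_of_forall_rel_succ_of_lt (ConeLE K) hA hmn
      exact .inl (_root_.trans hleft (_root_.trans hmid hright))

theorem exists_mem_Ico_add_one_of_le_sub {a : ℤ → ℝ} {c : ℝ} (hc : 0 < c)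
    (ha : ∀ n, c ≤ a (n + 1) - a n) (y : ℝ) : ∃ n, y ∈ Ico (a n) (a (n + 1)) := by
  have hmono : Monotone fun n : ℤ => a n - n * c :=
    monotone_int_of_le_succ fun n => by push_cast; linarith [ha n]
  obtain ⟨k, hk⟩ := exists_int_gt (|y - a 0| / c)
  rw [div_lt_iff₀ hc, abs_lt] at hk
  have hk₀ : 0 ≤ k := by
    by_contra! h
    have : (k : ℝ) * c < 0 := mul_neg_of_neg_of_pos (by exact_mod_cast h) hc
    linarith
  have hbelow : a (-k) ≤ y := by
    have := hmono (neg_nonpos.2 hk₀)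
    push_cast at this
    linarith
  have habove : y < a k := by
    have := hmono hk₀
    push_cast at this
    linarith
  have hamono : Monotone a := monotone_int_of_le_succ fun n => by linarith [ha n]
  obtain ⟨n, hn, hmax⟩ := Int.exists_greatest_of_bdd (P := fun n => a n ≤ y)
    ⟨k, fun n hn => (hamono.reflect_lt (hn.trans_lt habove)).le⟩ ⟨-k, hbelow⟩
  exact ⟨n, hn, lt_of_not_ge fun h => (hmax _ h).not_gt (lt_add_one n)⟩

theorem exists_mem_polyline_snd_eq {c : ℝ} (hc : 0 < c) (hA : ∀ n, c ≤ (A (n + 1)).2 - (A n).2)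
    (y : ℝ) : ∃ p ∈ ⋃ n, segment ℝ (A n) (A (n + 1)), p.2 = y := by
  obtain ⟨n, hn⟩ := exists_mem_Ico_add_one_of_le_sub (a := fun n => (A n).2) hc hA y
  have hy : y ∈ (LinearMap.snd ℝ ℝ ℝ).toAffineMap '' segment ℝ (A n) (A (n + 1)) := by
    rw [image_segment]
    exact segment_eq_Icc (hn.1.trans hn.2.le) ▸ Ico_subset_Icc_self hn
  obtain ⟨p, hp, rfl⟩ := hy
  exact ⟨p, mem_iUnion.2 ⟨n, hp⟩, rfl⟩

theorem exists_lipschitzWith_polyline_eq_graph {c : ℝ} (hc : 0 < c)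
    (hheight : ∀ n, c ≤ (A (n + 1)).2 - (A n).2) (hcone : ∀ n, ConeLE K (A n) (A (n + 1))) :
    ∃ f : ℝ → ℝ, LipschitzWith K f ∧
      ⋃ n, segment ℝ (A n) (A (n + 1)) = {p : ℝ × ℝ | p.1 = f p.2} := by
  choose P hmem hsnd using exists_mem_polyline_snd_eq hc hheight
  refine ⟨fun y => (P y).1, .of_dist_le_mul fun y z => ?_, Subset.antisymm (fun p hp => ?_) ?_⟩
  · rcases ConeLE.total_of_mem_polyline hcone (hmem y) (hmem z) with h | h <;>
      rw [ConeLE, hsnd, hsnd] at h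
    · rw [dist_comm, dist_comm y, Real.dist_eq]
      exact h.trans (mul_le_mul_of_nonneg_left (le_abs_self _) K.2)
    · rw [Real.dist_eq]
      exact h.trans (mul_le_mul_of_nonneg_left (le_abs_self _) K.2)
  · rcases ConeLE.total_of_mem_polyline hcone hp (hmem p.2) with h | h <;>
      rw [ConeLE, hsnd, sub_self, mul_zero, abs_nonpos_iff, sub_eq_zero] at h
    exacts [h.symm, h]
  · intro p hp
    convert hmem p.2
    exact Prod.ext hp (hsnd p.2).symm

end Polyline

namespace Rhombus

variable {r s : Rhombus} {w : Pt}

/-- The affine parametrization of a parallelogram by the unit square. -/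
def param (r : Rhombus) (z : ℝ × ℝ) : Pt :=
  r.pos + z.1 • r.u + z.2 • r.v

/-- The linear part of `Rhombus.param`. -/
def edgeMap (r : Rhombus) : ℝ × ℝ →ₗ[ℝ] Pt :=
  (LinearMap.toSpanSingleton ℝ Pt r.u).coprod (LinearMap.toSpanSingleton ℝ Pt r.v)

/-- The open parallelogram, without the edges. -/
def openSupport (r : Rhombus) : Set Pt :=
  r.param '' Ioo 0 1 ×ˢ Ioo 0 1

/-- The same parallelogram with its two edge vectors exchanged. -/
def swap (r : Rhombus) : Rhombus :=
  ⟨r.pos, r.v, r.u⟩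

/-- The same parallelogram seen from the other end of its first edge. -/
def flip (r : Rhombus) : Rhombus :=
  ⟨r.pos + r.u, -r.u, r.v⟩

/-- `r.IsReparam s` means that `s` describes the same parallelogram as `r`, possibly from another
vertex and with its edge vectors listed in another order. -/
inductive IsReparam (r : Rhombus) : Rhombus → Prop
  | refl : IsReparam r r
  | swap {s : Rhombus} : IsReparam r s → IsReparam r s.swap
  | flip {s : Rhombus} : IsReparam r s → IsReparam r s.flip

theorem param_eq_pos_add_edgeMap (r : Rhombus) (z : ℝ × ℝ) : r.param z = r.pos + r.edgeMap z :=
  add_assoc _ _ _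

theorem support_eq_image_param (r : Rhombus) : r.support = r.param '' Icc 0 1 ×ˢ Icc 0 1 := by
  ext p
  constructor
  · rintro ⟨s, t, hs, ht, rfl⟩
    exact ⟨(s, t), ⟨hs, ht⟩, rfl⟩
  · rintro ⟨⟨s, t⟩, ⟨hs, ht⟩, rfl⟩
    exact ⟨s, t, hs, ht, rfl⟩

theorem vertices_eq_image_param (r : Rhombus) : r.vertices = r.param '' {0, 1} ×ˢ {0, 1} := by
  simp only [vertices, param, insert_prod, singleton_prod, image_insert_eq, image_singleton,
    image_union, zero_smul, one_smul, add_zero]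
  ext p
  simp only [mem_insert_iff, mem_singleton_iff, mem_union]
  tauto

theorem segment_param (r : Rhombus) (z w : ℝ × ℝ) :
    segment ℝ (r.param z) (r.param w) = r.param '' segment ℝ z w := by
  have hparam : r.param = AffineMap.const ℝ (ℝ × ℝ) r.pos + r.edgeMap.toAffineMap :=
    funext r.param_eq_pos_add_edgeMap
  rw [hparam, ← AffineMap.coe_add, image_segment]

theorem edges_eq_image_param (r : Rhombus) :
    r.edges = {r.param '' Icc 0 1 ×ˢ {0}, r.param '' {1} ×ˢ Icc 0 1, r.param '' Icc 0 1 ×ˢ {1},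
      r.param '' {0} ×ˢ Icc 0 1} := by
  have hrow : ∀ t : ℝ, Icc (0 : ℝ) 1 ×ˢ {t} = segment ℝ (0, t) (1, t) := fun t => by
    rw [← Prod.image_mk_segment_left, segment_eq_Icc zero_le_one, prod_singleton]
  have hcol : ∀ t : ℝ, {t} ×ˢ Icc (0 : ℝ) 1 = segment ℝ (t, 0) (t, 1) := fun t => by
    rw [← Prod.image_mk_segment_right, segment_eq_Icc zero_le_one, singleton_prod]
  simp only [hrow, hcol, ← segment_param, param, zero_smul, one_smul, add_zero]
  rw [segment_symm ℝ (r.pos + r.v) (r.pos + r.u + r.v), segment_symm ℝ r.pos (r.pos + r.v)]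
  ext e
  simp only [edges, mem_range, Fin.exists_fin_succ, edge]
  simp [eq_comm]

theorem param_swap (r : Rhombus) : r.swap.param = r.param ∘ Prod.swap :=
  funext fun _ => add_right_comm _ _ _

theorem param_flip (r : Rhombus) : r.flip.param = r.param ∘ Prod.map (1 - ·) id := by
  funext ⟨s, t⟩
  simp only [param, flip, Function.comp_apply, Prod.map_apply, id_eq]
  module

theorem image_param_swap (r : Rhombus) (S T : Set ℝ) :
    r.swap.param '' S ×ˢ T = r.param '' T ×ˢ S := by
  rw [param_swap, image_comp, image_swap_prod]

theorem image_param_flip (r : Rhombus) (S T : Set ℝ) :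
    r.flip.param '' S ×ˢ T = r.param '' ((1 - ·) '' S) ×ˢ T := by
  rw [param_flip, image_comp, prodMap_image_prod, image_id]

namespace IsReparam

theorem support_eq (h : r.IsReparam s) : s.support = r.support := by
  induction h with
  | refl => rfl
  | swap _ ih => rw [← ih, support_eq_image_param, support_eq_image_param, image_param_swap]
  | flip _ ih =>
    rw [← ih, support_eq_image_param, support_eq_image_param, image_param_flip,
      image_const_sub_Icc, sub_zero, sub_self]

theorem openSupport_eq (h : r.IsReparam s) : s.openSupport = r.openSupport := by
  induction h with
  | refl => rfl
  | swap _ ih => rw [← ih, openSupport, openSupport, image_param_swap]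
  | flip _ ih =>
    rw [← ih, openSupport, openSupport, image_param_flip, image_const_sub_Ioo, sub_zero, sub_self]

theorem vertices_eq (h : r.IsReparam s) : s.vertices = r.vertices := by
  induction h with
  | refl => rfl
  | swap _ ih => rw [← ih, vertices_eq_image_param, vertices_eq_image_param, image_param_swap]
  | flip _ ih =>
    rw [← ih, vertices_eq_image_param, vertices_eq_image_param, image_param_flip, image_pair,
      sub_zero, sub_self, pair_comm]

theorem edges_eq (h : r.IsReparam s) : s.edges = r.edges := by
  induction h with
  | refl => rfl
  | swap _ ih =>
    rw [← ih, edges_eq_image_param, edges_eq_image_param]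
    simp only [image_param_swap]
    ext e
    simp only [mem_insert_iff, mem_singleton_iff]
    tauto
  | flip _ ih =>
    rw [← ih, edges_eq_image_param, edges_eq_image_param]
    simp only [image_param_flip, image_const_sub_Icc, image_singleton, sub_zero, sub_self]
    ext e
    simp only [mem_insert_iff, mem_singleton_iff]
    tauto

theorem linearIndependent (h : r.IsReparam s) (hr : LinearIndependent ℝ ![r.u, r.v]) :
    LinearIndependent ℝ ![s.u, s.v] := by
  induction h with
  | refl => exact hr
  | swap _ ih => exact LinearIndependent.pair_symm_iff.1 ih
  | flip _ ih => exact LinearIndependent.pair_neg_left_iff.2 ih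

theorem flip_right {a v : Pt} (h : r.IsReparam ⟨a, w, v⟩) : r.IsReparam ⟨a + v, w, -v⟩ :=
  h.swap.flip.swap

theorem hasEdgeDir (h : r.IsReparam s) : r.HasEdgeDir s.u ∧ r.HasEdgeDir s.v := by
  induction h with
  | refl => exact ⟨.inl rfl, .inr (.inr (.inl rfl))⟩
  | swap _ ih => exact ih.symm
  | flip _ ih =>
    refine ⟨?_, ih.2⟩
    simp only [HasEdgeDir, Rhombus.flip, neg_neg] at ih ⊢
    tauto

end IsReparam

theorem HasEdgeDir.exists_isReparam (h : r.HasEdgeDir w) : ∃ a v, r.IsReparam ⟨a, w, v⟩ := by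
  rcases h with rfl | h | rfl | h
  · exact ⟨_, _, .refl⟩
  · obtain rfl := neg_eq_iff_eq_neg.2 h
    exact ⟨_, _, .flip .refl⟩
  · exact ⟨_, _, .swap .refl⟩
  · obtain rfl := neg_eq_iff_eq_neg.2 h
    exact ⟨_, _, .flip (.swap .refl)⟩

theorem edge_zero_eq_image_param (r : Rhombus) : r.edge 0 = r.param '' Icc 0 1 ×ˢ {0} := by
  rw [prod_singleton, ← segment_eq_Icc zero_le_one, Prod.image_mk_segment_left, ← segment_param]
  simp [edge, param]

theorem exists_isReparam_of_mem_edges {e : Set Pt} (he : e ∈ r.edges) :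
    ∃ s, r.IsReparam s ∧ s.edge 0 = e := by
  simp only [edge_zero_eq_image_param]
  rw [edges_eq_image_param] at he
  rcases he with rfl | rfl | rfl | rfl
  · exact ⟨r, .refl, rfl⟩
  · refine ⟨r.flip.swap, .swap (.flip .refl), ?_⟩
    rw [image_param_swap, image_param_flip, image_singleton, sub_zero]
  · refine ⟨r.swap.flip.swap, .swap (.flip (.swap .refl)), ?_⟩
    rw [image_param_swap, image_param_flip, image_param_swap, image_singleton, sub_zero]
  · exact ⟨r.swap, .swap .refl, image_param_swap _ _ _⟩

theorem exists_isReparam_of_segment_mem_edges {a : Pt} (h : segment ℝ a (a + w) ∈ r.edges) :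
    ∃ v, r.IsReparam ⟨a, w, v⟩ := by
  obtain ⟨⟨b, w', v⟩, hs, hseg⟩ := exists_isReparam_of_mem_edges h
  rcases eq_and_eq_or_of_segment_eq hseg with ⟨rfl, hw⟩ | ⟨hpos, rfl⟩
  · exact ⟨v, add_left_cancel hw ▸ hs⟩
  · obtain rfl : w = -w' :=
      eq_neg_of_add_eq_zero_right (add_eq_left.1 (by rw [← add_assoc, ← hpos]))
    exact ⟨v, hs.flip⟩

theorem param_injective (hr : LinearIndependent ℝ ![r.u, r.v]) : Function.Injective r.param := by
  intro z w h
  simp only [param, add_assoc, add_right_inj] at h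
  exact Prod.ext_iff.2 (hr.eq_of_pair h)

theorem disjoint_openSupport_of_mem_edges (hr : LinearIndependent ℝ ![r.u, r.v]) {e : Set Pt}
    (he : e ∈ r.edges) : Disjoint r.openSupport e := by
  obtain ⟨s, hs, rfl⟩ := exists_isReparam_of_mem_edges he
  rw [← hs.openSupport_eq, openSupport, edge_zero_eq_image_param,
    disjoint_image_iff (param_injective (hs.linearIndependent hr)), disjoint_prod]
  exact .inr (disjoint_singleton_right.2 left_notMem_Ioo)

theorem vertices_subset_sUnion_edges (r : Rhombus) : r.vertices ⊆ ⋃₀ r.edges := by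
  rw [vertices_eq_image_param, edges_eq_image_param]
  simp only [sUnion_insert, sUnion_singleton, ← image_union]
  refine image_mono fun z hz => ?_
  have hz₁ : z.1 ∈ Icc (0 : ℝ) 1 :=
    pair_subset (left_mem_Icc.2 zero_le_one) (right_mem_Icc.2 zero_le_one) hz.1
  rcases hz.2 with hz₂ | hz₂
  · exact .inl ⟨hz₁, hz₂⟩
  · exact .inr (.inr (.inl ⟨hz₁, hz₂⟩))

theorem edge_eq_edge_zero_of_midpoint_mem (hr : LinearIndependent ℝ ![r.u, r.v]) {e : Set Pt}
    (he : e ∈ r.edges) (hmem : r.param (1 / 2, 0) ∈ e) : e = r.edge 0 := by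
  rw [edges_eq_image_param] at he
  rcases he with rfl | rfl | rfl | rfl <;>
    rw [(param_injective hr).mem_set_image] at hmem
  · exact r.edge_zero_eq_image_param.symm
  all_goals norm_num at hmem

theorem midpoint_notMem_vertices (hr : LinearIndependent ℝ ![r.u, r.v]) :
    r.param (1 / 2, 0) ∉ r.vertices := by
  rw [vertices_eq_image_param, (param_injective hr).mem_set_image]
  norm_num

theorem continuous_param (r : Rhombus) : Continuous r.param := by
  unfold param
  fun_prop

theorem openSupport_subset_support (r : Rhombus) : r.openSupport ⊆ r.support := by
  rw [support_eq_image_param]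
  exact image_mono (prod_mono Ioo_subset_Icc_self Ioo_subset_Icc_self)

theorem pos_mem_support (r : Rhombus) : r.pos ∈ r.support :=
  ⟨0, 0, left_mem_Icc.2 zero_le_one, left_mem_Icc.2 zero_le_one, by simp⟩

theorem isOpen_openSupport (hr : LinearIndependent ℝ ![r.u, r.v]) : IsOpen r.openSupport := by
  have hinj : Function.Injective r.edgeMap := fun z w h => param_injective hr <| by
    rw [param_eq_pos_add_edgeMap, param_eq_pos_add_edgeMap, h]
  have hsurj : Function.Surjective r.edgeMap :=
    (LinearMap.injective_iff_surjective_of_finrank_eq_finrank (by simp)).1 hinj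
  have hopen : IsOpenMap r.param := by
    rw [funext r.param_eq_pos_add_edgeMap]
    exact (isOpenMap_add_left r.pos).comp (r.edgeMap.isOpenMap_of_finiteDimensional hsurj)
  exact hopen _ (isOpen_Ioo.prod isOpen_Ioo)

theorem isCompact_support (r : Rhombus) : IsCompact r.support := by
  rw [support_eq_image_param]
  exact (isCompact_Icc.prod isCompact_Icc).image r.continuous_param

theorem support_subset_closure_openSupport (r : Rhombus) : r.support ⊆ closure r.openSupport := by
  rw [support_eq_image_param, openSupport, ← closure_Ioo zero_ne_one, ← closure_prod_eq]
  exact image_closure_subset_closure_image r.continuous_param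

end Rhombus

/-- An edge-to-edge tiling of the plane by parallelograms, given by the same data as rhombi but with
edge vectors of arbitrary lengths. -/
structure IsParallelogramTiling (x : Set Rhombus) : Prop where
  linearIndependent : ∀ r ∈ x, LinearIndependent ℝ ![r.u, r.v]
  iUnion_support : ⋃ r ∈ x, r.support = univ
  edgeToEdgePair : ∀ r ∈ x, ∀ s ∈ x, r ≠ s → EdgeToEdgePair r s

theorem IsTiling.isParallelogramTiling {x : Set Rhombus} (hx : IsTiling x) :
    IsParallelogramTiling x :=
  ⟨fun r hr => (hx.1 r hr).1, hx.2.1, hx.2.2⟩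

theorem EdgeToEdgePair.inter_support_subset {r s : Rhombus} (h : EdgeToEdgePair r s) :
    r.support ∩ s.support ⊆ ⋃₀ r.edges := by
  rcases h with h | ⟨p, hpr, -, h⟩ | ⟨e, her, -, h⟩ <;> rw [h]
  · exact empty_subset _
  · exact singleton_subset_iff.2 (r.vertices_subset_sUnion_edges hpr)
  · exact subset_sUnion_of_mem her

open scoped Topology in
theorem Rhombus.inter_openSupport_nonempty_of_sameSide {p u v w : Pt} {α β : ℝ} (hβ : 0 < β)
    (hw : w = α • u + β • v) :
    (openSupport ⟨p, u, v⟩ ∩ openSupport ⟨p, u, w⟩).Nonempty := by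
  have hparam : ∀ t : ℝ, param ⟨p, u, w⟩ (1 / 2, t) = param ⟨p, u, v⟩ (1 / 2 + t * α, t * β) :=
    fun t => by
      simp only [param, hw]
      module
  have hopen : IsOpen {t : ℝ | 1 / 2 + t * α ∈ Ioo 0 1 ∧ t < 1 ∧ t * β < 1} :=
    (isOpen_Ioo.preimage (f := fun t => 1 / 2 + t * α) (by fun_prop)).inter
      (isOpen_Iio.inter (isOpen_Iio.preimage (f := (· * β)) (by fun_prop)))
  have hsmall : ∀ᶠ t : ℝ in 𝓝[>] 0, 1 / 2 + t * α ∈ Ioo 0 1 ∧ t < 1 ∧ t * β < 1 :=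
    nhdsWithin_le_nhds (hopen.mem_nhds (by norm_num))
  obtain ⟨t, ⟨hα, ht₁, hβ₁⟩, ht₀⟩ := (hsmall.and self_mem_nhdsWithin).exists
  refine ⟨param ⟨p, u, w⟩ (1 / 2, t), ?_, mem_image_of_mem _ ⟨by norm_num, ht₀, ht₁⟩⟩
  rw [hparam]
  exact mem_image_of_mem _ ⟨hα, mul_pos ht₀ hβ, hβ₁⟩

namespace IsParallelogramTiling

variable {T x : Set Rhombus} {r s : Rhombus}

theorem eq_of_mem_openSupport (hx : IsParallelogramTiling x) (hr : r ∈ x) (hs : s ∈ x) {p : Pt}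
    (hpr : p ∈ r.openSupport) (hps : p ∈ s.support) : r = s := by
  by_contra hne
  obtain ⟨e, he, hpe⟩ := (hx.edgeToEdgePair r hr s hs hne).inter_support_subset
    ⟨r.openSupport_subset_support hpr, hps⟩
  have hdisj := Rhombus.disjoint_openSupport_of_mem_edges (hx.linearIndependent r hr) he
  exact hdisj.notMem_of_mem_left hpr hpe

theorem inter_support_eq_edge_zero (hx : IsParallelogramTiling x) (hr : r ∈ x) (hs : s ∈ x)
    (hne : r ≠ s) {r' : Rhombus} (hr' : r.IsReparam r') (hmid : r'.param (1 / 2, 0) ∈ s.support) :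
    r'.edge 0 ∈ s.edges ∧ r.support ∩ s.support = r'.edge 0 := by
  have hind := hr'.linearIndependent (hx.linearIndependent r hr)
  have hmem : r'.param (1 / 2, 0) ∈ r.support ∩ s.support := by
    refine ⟨?_, hmid⟩
    rw [← hr'.support_eq, Rhombus.support_eq_image_param]
    exact mem_image_of_mem _ (by norm_num)
  rcases hx.edgeToEdgePair r hr s hs hne with h | ⟨p, hpr, -, h⟩ | ⟨e, her, hes, h⟩ <;>
    rw [h] at hmem
  · exact hmem.elim
  · rw [mem_singleton_iff] at hmem
    rw [← hmem, ← hr'.vertices_eq] at hpr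
    exact (Rhombus.midpoint_notMem_vertices hind hpr).elim
  · rw [← hr'.edges_eq] at her
    obtain rfl := Rhombus.edge_eq_edge_zero_of_midpoint_mem hind her hmem
    exact ⟨hes, h⟩

theorem exists_pos_forall_le_dist_pos (hx : IsParallelogramTiling x) {q : Rhombus} (hq : q ∈ x) :
    ∃ ε > 0, ∀ r ∈ x, r.SameShape q → ∀ s ∈ x, s.SameShape q → r ≠ s → ε ≤ dist r.pos s.pos := by
  have hcenter : q.param (1 / 2, 1 / 2) ∈ q.openSupport := mem_image_of_mem _ (by norm_num)
  obtain ⟨ε, hε, hball⟩ :=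
    isOpen_iff.1 (Rhombus.isOpen_openSupport (hx.linearIndependent q hq)) _ hcenter
  refine ⟨ε, hε, fun r hr hrq s hs hsq => ?_⟩
  contrapose!
  intro hdist
  have hmem : q.param (1 / 2, 1 / 2) + (r.pos - s.pos) ∈ ball (q.param (1 / 2, 1 / 2)) ε := by
    rwa [mem_ball, dist_self_add_left, ← dist_eq_norm]
  obtain ⟨z, hz, hzeq⟩ := hball hmem
  have hrs : s.param z = r.param (1 / 2, 1 / 2) := by
    rw [Rhombus.param, hsq.1, hsq.2, Rhombus.param, hrq.1, hrq.2]
    rw [Rhombus.param, Rhombus.param] at hzeq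
    linear_combination (norm := module) hzeq
  refine (hx.eq_of_mem_openSupport hs hr (mem_image_of_mem _ hz) ?_).symm
  exact hrs ▸ r.openSupport_subset_support (mem_image_of_mem _ (by norm_num))

theorem finite_setOf_sameShape (hx : IsParallelogramTiling x) (q : Rhombus) {B : Set Pt}
    (hB : IsCompact B) : {r ∈ x | r.SameShape q ∧ r.pos ∈ B}.Finite := by
  rcases eq_empty_or_nonempty {r ∈ x | r.SameShape q ∧ r.pos ∈ B} with h | ⟨r₀, hr₀, hq, -⟩
  · exact h ▸ finite_empty
  obtain ⟨ε, hε, hsep⟩ := hx.exists_pos_forall_le_dist_pos hr₀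
  have htrans : ∀ {r : Rhombus}, r.SameShape q → r.SameShape r₀ := fun hr =>
    ⟨hr.1.trans hq.1.symm, hr.2.trans hq.2.symm⟩
  let _ : TopologicalSpace {r ∈ x | r.SameShape q} := ⊥
  have : DiscreteTopology {r ∈ x | r.SameShape q} := ⟨rfl⟩
  have hemb : Topology.IsClosedEmbedding fun r : {r ∈ x | r.SameShape q} => r.1.pos :=
    isClosedEmbedding_of_pairwise_le_dist hε fun r s hrs =>
      hsep r r.2.1 (htrans r.2.2) s s.2.1 (htrans s.2.2) (Subtype.coe_injective.ne hrs)
  refine ((isCompact_iff_finite.1 (hemb.isCompact_preimage hB)).image Subtype.val).subset ?_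
  rintro r ⟨hr, hrq, hrB⟩
  exact ⟨⟨r, hr, hrq⟩, hrB, rfl⟩

theorem locallyFinite_support (hx : IsParallelogramTiling x) (hT : T.Finite)
    (hTx : UsesShapes T x) : LocallyFinite fun r : x => r.1.support := by
  refine fun p => ⟨ball p 1, ball_mem_nhds p one_pos, ?_⟩
  have hfin := hT.biUnion fun q _ =>
    hx.finite_setOf_sameShape q (isCompact_closedBall p (1 + ‖q.u‖ + ‖q.v‖))
  refine (hfin.preimage Subtype.coe_injective.injOn).subset ?_
  rintro ⟨r, hr⟩ ⟨_, ⟨s, t, hs, ht, rfl⟩, hball⟩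
  obtain ⟨q, hq, hrq⟩ := hTx r hr
  refine mem_biUnion hq ⟨hr, hrq, ?_⟩
  rw [mem_ball_iff_norm] at hball
  rw [mem_closedBall_iff_norm, ← hrq.1, ← hrq.2]
  calc ‖r.pos - p‖ = ‖(r.pos + s • r.u + t • r.v - p) - s • r.u - t • r.v‖ := by congr 1; module
    _ ≤ ‖r.pos + s • r.u + t • r.v - p‖ + ‖s • r.u‖ + ‖t • r.v‖ :=
      (norm_sub_le _ _).trans (by gcongr; exact norm_sub_le _ _)
    _ ≤ 1 + ‖r.u‖ + ‖r.v‖ := by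
      rw [norm_smul, norm_smul, Real.norm_of_nonneg hs.1, Real.norm_of_nonneg ht.1]
      gcongr
      · exact mul_le_of_le_one_left (norm_nonneg _) hs.2
      · exact mul_le_of_le_one_left (norm_nonneg _) ht.2

theorem exists_mem_support_of_ne (hx : IsParallelogramTiling x)
    (hlf : LocallyFinite fun r : x => r.1.support) (hr : r ∈ x) {r' : Rhombus}
    (hr' : r.IsReparam r') : ∃ s ∈ x, r ≠ s ∧ r'.param (1 / 2, 0) ∈ s.support := by
  have hinj := Rhombus.param_injective (hr'.linearIndependent (hx.linearIndependent r hr))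
  let others : Set Pt := ⋃ s : {s : x // r ≠ s}, s.1.1.support
  have hclosed : IsClosed others :=
    (hlf.comp_injective Subtype.val_injective).isClosed_iUnion
      fun s => s.1.1.isCompact_support.isClosed
  have hbelow : r'.param '' {1 / 2} ×ˢ Iio 0 ⊆ others := by
    rintro _ ⟨z, hz, rfl⟩
    have hcov : r'.param z ∈ ⋃ s ∈ x, s.support := hx.iUnion_support ▸ mem_univ _
    obtain ⟨s, hs, hzs⟩ := mem_iUnion₂.1 hcov
    refine mem_iUnion.2 ⟨⟨⟨s, hs⟩, ?_⟩, hzs⟩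
    rintro rfl
    rw [← hr'.support_eq, Rhombus.support_eq_image_param, hinj.mem_set_image] at hzs
    exact hzs.2.1.not_gt hz.2
  have hmid : r'.param (1 / 2, 0) ∈ others := by
    refine closure_minimal hbelow hclosed <|
      image_closure_subset_closure_image r'.continuous_param <| mem_image_of_mem _ ?_
    rw [closure_prod_eq, closure_singleton, closure_Iio]
    exact ⟨rfl, self_mem_Iic⟩
  obtain ⟨⟨⟨s, hs⟩, hne⟩, hmem⟩ := mem_iUnion.1 hmid
  exact ⟨s, hs, hne, hmem⟩

/-- Open supports are dense in the supports and meet no other tile. -/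
theorem inter_nonempty_of_interior_nonempty (hx : IsParallelogramTiling x)
    {C D : Set Rhombus} (hC : C ⊆ x) (hD : D ⊆ x)
    (h : (interior (ChainSupp C ∩ ChainSupp D)).Nonempty) : (C ∩ D).Nonempty := by
  obtain ⟨p, hp⟩ := h
  obtain ⟨r, hr, hpr⟩ := mem_iUnion₂.1 (interior_subset hp).1
  obtain ⟨q, hq, hqr⟩ := mem_closure_iff.1 (r.support_subset_closure_openSupport hpr) _
    isOpen_interior hp
  obtain ⟨s, hs, hqs⟩ := mem_iUnion₂.1 (interior_subset hq).2
  exact ⟨r, hr, hx.eq_of_mem_openSupport (hC hr) (hD hs) hqr hqs ▸ hs⟩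

end IsParallelogramTiling

/-- A tile of `x` with edge direction `u`, described from its bottom `u`-edge: `base` is the left
end of that edge, and `vec` joins the bottom edge to the top edge. Positions refer to the chart `φ`,
meant to send `u` to `(1, 0)`. -/
structure UTile (x : Set Rhombus) (u : Pt) (φ : Pt ≃L[ℝ] ℝ × ℝ) where
  tile : Rhombus
  base : Pt
  vec : Pt
  mem : tile ∈ x
  isReparam : tile.IsReparam ⟨base, u, vec⟩
  vec_pos : 0 < (φ vec).2

section Sides

variable {x : Set Rhombus} {u : Pt} {φ : Pt ≃L[ℝ] ℝ × ℝ} {r s : Rhombus}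

theorem snd_ne_zero_of_linearIndependent (hφ : φ u = (1, 0)) {v : Pt}
    (h : LinearIndependent ℝ ![u, v]) : (φ v).2 ≠ 0 := fun h₀ => by
  have hu : u ≠ 0 := fun hu => by simp [hu, Prod.ext_iff] at hφ
  refine (LinearIndependent.pair_iff' hu).1 h (φ v).1 (φ.injective ?_)
  rw [map_smul, hφ]
  ext <;> simp [h₀]

theorem exists_eq_smul_add_smul_of_snd_ne_zero (hφ : φ u = (1, 0)) {v : Pt} (hv : (φ v).2 ≠ 0)
    (w : Pt) : ∃ α : ℝ, w = α • u + ((φ w).2 / (φ v).2) • v := by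
  refine ⟨(φ w).1 - (φ w).2 / (φ v).2 * (φ v).1, φ.injective ?_⟩
  rw [map_add, map_smul, map_smul, hφ]
  ext <;> simp [hv]

namespace IsParallelogramTiling

theorem eq_of_sameSide (hx : IsParallelogramTiling x) (hφ : φ u = (1, 0)) (hr : r ∈ x)
    (hs : s ∈ x) {p v w : Pt} (hrv : r.IsReparam ⟨p, u, v⟩) (hsw : s.IsReparam ⟨p, u, w⟩)
    (hside : 0 < (φ w).2 / (φ v).2) : r = s := by
  obtain ⟨α, hα⟩ := exists_eq_smul_add_smul_of_snd_ne_zero hφ (div_ne_zero_iff.1 hside.ne').2 w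
  obtain ⟨q, hqr, hqs⟩ := Rhombus.inter_openSupport_nonempty_of_sameSide (p := p) hside hα
  rw [hrv.openSupport_eq] at hqr
  rw [hsw.openSupport_eq] at hqs
  exact hx.eq_of_mem_openSupport hr hs hqr (s.openSupport_subset_support hqs)

theorem exists_opposite (hx : IsParallelogramTiling x)
    (hlf : LocallyFinite fun r : x => r.1.support) (hφ : φ u = (1, 0)) (hr : r ∈ x) {p v : Pt}
    (hrv : r.IsReparam ⟨p, u, v⟩) :
    ∃ s ∈ x, ∃ w, s.IsReparam ⟨p, u, w⟩ ∧ (φ w).2 / (φ v).2 < 0 := by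
  obtain ⟨s, hs, hne, hmid⟩ := hx.exists_mem_support_of_ne hlf hr hrv
  obtain ⟨hedge, -⟩ := hx.inter_support_eq_edge_zero hr hs hne hrv hmid
  obtain ⟨w, hsw⟩ := Rhombus.exists_isReparam_of_segment_mem_edges hedge
  have hv := snd_ne_zero_of_linearIndependent hφ (hrv.linearIndependent (hx.linearIndependent r hr))
  have hw := snd_ne_zero_of_linearIndependent hφ (hsw.linearIndependent (hx.linearIndependent s hs))
  refine ⟨s, hs, w, hsw, (div_ne_zero hw hv).lt_of_le ?_⟩
  exact not_lt.1 fun hside => hne (hx.eq_of_sameSide hφ hr hs hrv hsw hside)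

end IsParallelogramTiling

end Sides

/-- The height in the chart `φ`, with the horizontal coordinate as tie-breaker; it singles out the
lower left and the upper right vertex of a tile. -/
def lexHeight (φ : Pt ≃L[ℝ] ℝ × ℝ) (p : Pt) : ℝ ×ₗ ℝ :=
  toLex (φ p).swap

theorem lexHeight_injective (φ : Pt ≃L[ℝ] ℝ × ℝ) : Function.Injective (lexHeight φ) :=
  toLex.injective.comp (Prod.swap_injective.comp φ.injective)

namespace UTile

variable {x : Set Rhombus} {u : Pt} {φ : Pt ≃L[ℝ] ℝ × ℝ}

theorem mem_support_iff (t : UTile x u φ) {p : Pt} : p ∈ t.tile.support ↔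
    ∃ a b : ℝ, a ∈ Icc 0 1 ∧ b ∈ Icc 0 1 ∧ p = t.base + a • u + b • t.vec := by
  rw [← t.isReparam.support_eq]
  rfl

theorem isLeast_lexHeight_base (hφ : φ u = (1, 0)) (t : UTile x u φ) :
    IsLeast (lexHeight φ '' t.tile.support) (lexHeight φ t.base) := by
  refine ⟨mem_image_of_mem _ (t.mem_support_iff.2 ⟨0, 0, by simp⟩), ?_⟩
  rintro _ ⟨p, hp, rfl⟩
  obtain ⟨a, b, ha, hb, rfl⟩ := t.mem_support_iff.1 hp
  simp only [lexHeight, Prod.Lex.toLex_le_toLex, map_add, map_smul, hφ, Prod.fst_swap,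
    Prod.snd_swap, Prod.fst_add, Prod.snd_add, Prod.smul_fst, Prod.smul_snd, smul_eq_mul]
  rcases hb.1.eq_or_lt with rfl | hb₀
  · exact .inr ⟨by ring, by linarith [ha.1]⟩
  · exact .inl (by linarith [mul_pos hb₀ t.vec_pos])

theorem isGreatest_lexHeight_base_add (hφ : φ u = (1, 0)) (t : UTile x u φ) :
    IsGreatest (lexHeight φ '' t.tile.support) (lexHeight φ (t.base + u + t.vec)) := by
  refine ⟨mem_image_of_mem _ (t.mem_support_iff.2 ⟨1, 1, by simp⟩), ?_⟩
  rintro _ ⟨p, hp, rfl⟩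
  obtain ⟨a, b, ha, hb, rfl⟩ := t.mem_support_iff.1 hp
  simp only [lexHeight, Prod.Lex.toLex_le_toLex, map_add, map_smul, hφ, Prod.fst_swap,
    Prod.snd_swap, Prod.fst_add, Prod.snd_add, Prod.smul_fst, Prod.smul_snd, smul_eq_mul]
  rcases hb.2.eq_or_lt with rfl | hb₁
  · exact .inr ⟨by ring, by linarith [ha.2]⟩
  · exact .inl (by linarith [mul_lt_of_lt_one_left t.vec_pos hb₁])

theorem eq_of_tile_eq (hφ : φ u = (1, 0)) {s t : UTile x u φ} (h : s.tile = t.tile) : s = t := by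
  have hbase : s.base = t.base := lexHeight_injective φ <|
    (s.isLeast_lexHeight_base hφ).unique (h ▸ t.isLeast_lexHeight_base hφ)
  have hvec : s.base + u + s.vec = t.base + u + t.vec := lexHeight_injective φ <|
    (s.isGreatest_lexHeight_base_add hφ).unique (h ▸ t.isGreatest_lexHeight_base_add hφ)
  rw [hbase, add_right_inj] at hvec
  cases s
  cases t
  congr

theorem exists_tile_eq (hx : IsParallelogramTiling x) (hφ : φ u = (1, 0)) {r : Rhombus}
    (hr : r ∈ x) {a v : Pt} (hrv : r.IsReparam ⟨a, u, v⟩) :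
    ∃ t : UTile x u φ, t.tile = r ∧ (a = t.base ∨ a = t.base + t.vec) := by
  have hv := snd_ne_zero_of_linearIndependent hφ (hrv.linearIndependent (hx.linearIndependent r hr))
  rcases hv.lt_or_gt with hneg | hpos
  · refine ⟨⟨r, a + v, -v, hr, hrv.flip_right, ?_⟩, rfl, .inr (add_neg_cancel_right a v).symm⟩
    rw [map_neg]
    exact neg_pos.2 hneg
  · exact ⟨⟨r, a, v, hr, hrv, hpos⟩, rfl, .inl rfl⟩

theorem eq_base_or_eq_base_add_vec (hx : IsParallelogramTiling x) (hφ : φ u = (1, 0))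
    {t : UTile x u φ} {a : Pt} (ha : segment ℝ a (a + u) ∈ t.tile.edges) :
    a = t.base ∨ a = t.base + t.vec := by
  obtain ⟨v, hv⟩ := Rhombus.exists_isReparam_of_segment_mem_edges ha
  obtain ⟨t', ht', hpos⟩ := exists_tile_eq hx hφ t.mem hv
  rwa [eq_of_tile_eq hφ ht'] at hpos

theorem eq_of_base_eq (hx : IsParallelogramTiling x) (hφ : φ u = (1, 0)) {s t : UTile x u φ}
    (h : s.base = t.base) : s = t :=
  eq_of_tile_eq hφ <| hx.eq_of_sameSide hφ s.mem t.mem s.isReparam (h ▸ t.isReparam)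
    (div_pos t.vec_pos s.vec_pos)

theorem eq_of_base_add_vec_eq (hx : IsParallelogramTiling x) (hφ : φ u = (1, 0))
    {s t : UTile x u φ} (h : s.base + s.vec = t.base + t.vec) : s = t := by
  refine eq_of_tile_eq hφ <| hx.eq_of_sameSide hφ s.mem t.mem s.isReparam.flip_right
    (h ▸ t.isReparam.flip_right) ?_
  rw [map_neg, map_neg, Prod.snd_neg, Prod.snd_neg, neg_div_neg_eq]
  exact div_pos t.vec_pos s.vec_pos

theorem exists_base_eq_base_add_vec (hx : IsParallelogramTiling x)
    (hlf : LocallyFinite fun r : x => r.1.support) (hφ : φ u = (1, 0)) (s : UTile x u φ) :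
    ∃ t : UTile x u φ, t.base = s.base + s.vec := by
  obtain ⟨r, hr, w, hrw, hside⟩ := hx.exists_opposite hlf hφ s.mem s.isReparam.flip_right
  rw [map_neg, Prod.snd_neg, div_neg, neg_lt_zero, div_pos_iff_of_pos_right s.vec_pos] at hside
  exact ⟨⟨r, _, w, hr, hrw, hside⟩, rfl⟩

theorem exists_base_add_vec_eq_base (hx : IsParallelogramTiling x)
    (hlf : LocallyFinite fun r : x => r.1.support) (hφ : φ u = (1, 0)) (s : UTile x u φ) :
    ∃ t : UTile x u φ, t.base + t.vec = s.base := by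
  obtain ⟨r, hr, w, hrw, hside⟩ := hx.exists_opposite hlf hφ s.mem s.isReparam
  refine ⟨⟨r, s.base + w, -w, hr, hrw.flip_right, ?_⟩, add_neg_cancel_right s.base w⟩
  rw [map_neg]
  exact neg_pos.2 (neg_of_div_neg_left hside s.vec_pos.le)

theorem exists_perm_base_eq_base_add_vec (hx : IsParallelogramTiling x)
    (hlf : LocallyFinite fun r : x => r.1.support) (hφ : φ u = (1, 0)) :
    ∃ N : Equiv.Perm (UTile x u φ), ∀ t, (N t).base = t.base + t.vec := by
  choose next hnext using exists_base_eq_base_add_vec hx hlf hφ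
  choose prev hprev using exists_base_add_vec_eq_base hx hlf hφ
  refine ⟨⟨next, prev, fun t => ?_, fun t => ?_⟩, hnext⟩
  · exact eq_of_base_add_vec_eq hx hφ ((hprev _).trans (hnext t))
  · exact eq_of_base_eq hx hφ ((hnext _).trans (hprev t))

end UTile

section Chains

variable {x : Set Rhombus} {u : Pt} {φ : Pt ≃L[ℝ] ℝ × ℝ} {N : Equiv.Perm (UTile x u φ)}

namespace UTile

/-- The tiles on the orbit of `s` under `N`; when `N` moves to the tile above, these are the tiles
of the chain through `s`. -/
def orbitTiles (N : Equiv.Perm (UTile x u φ)) (s : UTile x u φ) : Set Rhombus :=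
  tile '' {t | N.SameCycle s t}

theorem range_tile_zpow (N : Equiv.Perm (UTile x u φ)) (s : UTile x u φ) :
    range (fun n : ℤ => ((N ^ n) s).tile) = orbitTiles N s :=
  (range_comp tile fun n : ℤ => (N ^ n) s).trans <| congrArg (tile '' ·) <|
    range_eq_setOf_sameCycle fun n => by
      rw [add_comm, zpow_one_add, Equiv.Perm.mul_apply]

theorem inter_support_eq (hx : IsParallelogramTiling x) (hφ : φ u = (1, 0)) {s t : UTile x u φ}
    (h : t.base = s.base + s.vec) :
    segment ℝ t.base (t.base + u) ∈ s.tile.edges ∧ segment ℝ t.base (t.base + u) ∈ t.tile.edges ∧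
      s.tile.support ∩ t.tile.support = segment ℝ t.base (t.base + u) := by
  have hne : s.tile ≠ t.tile := fun hst => by
    rw [← eq_of_tile_eq hφ hst, left_eq_add] at h
    exact s.vec_pos.ne' (by rw [h, map_zero, Prod.snd_zero])
  have hs : s.tile.IsReparam ⟨t.base, u, -s.vec⟩ := h ▸ s.isReparam.flip_right
  have hmid : Rhombus.param ⟨t.base, u, -s.vec⟩ (1 / 2, 0) ∈ t.tile.support :=
    t.mem_support_iff.2 ⟨1 / 2, 0, by norm_num, by norm_num, by simp [Rhombus.param]⟩
  obtain ⟨hedge, hinter⟩ := hx.inter_support_eq_edge_zero s.mem t.mem hne hs hmid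
  refine ⟨?_, hedge, hinter⟩
  rw [← hs.edges_eq]
  exact mem_range_self 0

theorem isChainSet_orbitTiles (hx : IsParallelogramTiling x) (hφ : φ u = (1, 0))
    (hN : ∀ t, (N t).base = t.base + t.vec) (s : UTile x u φ) :
    IsChainSet x u (orbitTiles N s) := by
  let t : ℤ → UTile x u φ := fun n => (N ^ n) s
  have hbase : ∀ n, (t (n + 1)).base = (t n).base + (t n).vec := fun n => by
    rw [← hN, ← Equiv.Perm.mul_apply, ← zpow_one_add, add_comm]
  have hinter := fun n => inter_support_eq hx hφ (hbase n)
  refine ⟨⟨fun n => (t n).tile, fun n => (t n).mem, fun n => ⟨_, hinter n⟩, fun n h => ?_⟩,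
    (range_tile_zpow N s).symm⟩
  have hpred := (hinter (n - 1)).2.2
  rw [sub_add_cancel] at hpred
  rw [hpred, (hinter n).2.2] at h
  have hheight : (φ (t n).base).2 = (φ (t (n + 1)).base).2 := by
    rcases eq_and_eq_or_of_segment_eq h with ⟨h, -⟩ | ⟨h, -⟩ <;> simp [h, hφ]
  rw [hbase, map_add, Prod.snd_add, left_eq_add] at hheight
  exact (t n).vec_pos.ne' hheight

theorem support_ne_segment (hφ : φ u = (1, 0)) (t : UTile x u φ) (a : Pt) :
    t.tile.support ≠ segment ℝ a (a + u) := fun h => by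
  have hheight : ∀ p ∈ t.tile.support, (φ p).2 = (φ a).2 := fun p hp => by
    rw [h, segment_eq_image'] at hp
    obtain ⟨c, -, rfl⟩ := hp
    simp [hφ]
  have hbot := hheight t.base (t.mem_support_iff.2 ⟨0, 0, by simp⟩)
  have htop := hheight (t.base + t.vec) (t.mem_support_iff.2 ⟨0, 1, by simp⟩)
  rw [map_add, Prod.snd_add, hbot, add_eq_left] at htop
  exact t.vec_pos.ne' htop

theorem base_eq_base_add_vec_or (hx : IsParallelogramTiling x) (hφ : φ u = (1, 0))
    {s t : UTile x u φ} {a : Pt} (hs : segment ℝ a (a + u) ∈ s.tile.edges)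
    (ht : segment ℝ a (a + u) ∈ t.tile.edges) (hne : s ≠ t) :
    t.base = s.base + s.vec ∨ s.base = t.base + t.vec := by
  rcases eq_base_or_eq_base_add_vec hx hφ hs with hs | hs <;>
    rcases eq_base_or_eq_base_add_vec hx hφ ht with ht | ht
  · exact (hne (eq_of_base_eq hx hφ (hs.symm.trans ht))).elim
  · exact .inr (hs.symm.trans ht)
  · exact .inl (ht.symm.trans hs)
  · exact (hne (eq_of_base_add_vec_eq hx hφ (hs.symm.trans ht))).elim

theorem exists_tiles_eq_orbitTiles (hx : IsParallelogramTiling x) (hφ : φ u = (1, 0))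
    (hN : ∀ t, (N t).base = t.base + t.vec) (c : Chain x u) :
    ∃ s, c.tiles = orbitTiles N s := by
  have hu : ∀ n, ∃ t : UTile x u φ, t.tile = c.seq n := fun n => by
    obtain ⟨a, ha, -, -⟩ := c.shares n
    obtain ⟨v, hv⟩ := Rhombus.exists_isReparam_of_segment_mem_edges ha
    obtain ⟨t, ht, -⟩ := exists_tile_eq hx hφ (c.mem n) hv
    exact ⟨t, ht⟩
  choose t ht using hu
  have hstep : ∀ n, t (n + 1) = N (t n) ∨ t n = N (t (n + 1)) := fun n => by
    obtain ⟨a, ha, ha', hinter⟩ := c.shares n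
    have hne : t n ≠ t (n + 1) := fun h => by
      rw [← ht, ← ht, ← h, inter_self] at hinter
      exact support_ne_segment hφ _ _ hinter
    rw [← ht] at ha ha'
    exact (base_eq_base_add_vec_or hx hφ ha ha' hne).imp
      (fun h => eq_of_base_eq hx hφ (h.trans (hN _).symm))
      (fun h => eq_of_base_eq hx hφ (h.trans (hN _).symm))
  have hne : ∀ n, t n ≠ t (n + 2) := fun n h => by
    have hprog := c.progress (n + 1)
    rw [add_sub_cancel_right, add_assoc, one_add_one_eq_two, ← ht n, ← ht (n + 2), ← h,
      inter_comm] at hprog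
    exact hprog rfl
  refine ⟨t 0, ?_⟩
  rw [orbitTiles, ← range_eq_setOf_sameCycle_of_ne hstep hne, ← range_comp]
  exact congrArg range (funext fun n => (ht n).symm)

theorem orbitTiles_eq_of_inter_nonempty (hφ : φ u = (1, 0)) {s t : UTile x u φ}
    (h : (orbitTiles N s ∩ orbitTiles N t).Nonempty) : orbitTiles N s = orbitTiles N t := by
  obtain ⟨_, ⟨q, hsq, rfl⟩, q', htq, hq⟩ := h
  obtain rfl := eq_of_tile_eq hφ hq
  have hst : N.SameCycle s t := Equiv.Perm.SameCycle.trans hsq (Equiv.Perm.SameCycle.symm htq)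
  exact congrArg (tile '' ·) (ext fun p => ⟨hst.symm.trans, hst.trans⟩)

end UTile

end Chains

section Strips

variable {T x : Set Rhombus} {u : Pt} {φ : Pt ≃L[ℝ] ℝ × ℝ} {N : Equiv.Perm (UTile x u φ)}

/-- The strip of horizontal width one to the right of the graph of `f`, in the chart `φ`. -/
def strip (φ : Pt ≃L[ℝ] ℝ × ℝ) (f : ℝ → ℝ) : Set Pt :=
  {p | (φ p).1 ∈ Icc (f (φ p).2) (f (φ p).2 + 1)}

theorem interior_strip_inter_strip_nonempty {f g : ℝ → ℝ} (hf : Continuous f) (hg : Continuous g)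
    {y : ℝ} (h : |f y - g y| < 1) : (interior (strip φ f ∩ strip φ g)).Nonempty := by
  have hopen : IsOpen {p | (φ p).1 ∈
      Ioo (f (φ p).2) (f (φ p).2 + 1) ∩ Ioo (g (φ p).2) (g (φ p).2 + 1)} := by
    simp only [mem_inter_iff, mem_Ioo, ofPred_and]
    refine .inter (.inter ?_ ?_) (.inter ?_ ?_) <;> exact isOpen_lt (by fun_prop) (by fun_prop)
  rw [abs_lt] at h
  refine ⟨φ.symm ((f y + g y + 1) / 2, y), mem_interior.2 ⟨_, fun p hp =>
    ⟨Ioo_subset_Icc_self hp.1, Ioo_subset_Icc_self hp.2⟩, hopen, ?_⟩⟩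
  rw [mem_ofPred_eq, φ.apply_symm_apply]
  constructor <;> constructor <;> dsimp only <;> linarith

namespace UTile

theorem finite_range_vec (hT : T.Finite) (hTx : UsesShapes T x) :
    (range (vec : UTile x u φ → Pt)).Finite := by
  refine (hT.biUnion fun q _ => toFinite {q.u, -q.u, q.v, -q.v}).subset ?_
  rintro _ ⟨t, rfl⟩
  obtain ⟨q, hq, hqu, hqv⟩ := hTx t.tile t.mem
  refine mem_biUnion hq ?_
  rw [← hqu, ← hqv]
  rcases t.isReparam.hasEdgeDir.2 with h | h | h | h <;> simp [h]

theorem exists_slope_bound (hT : T.Finite) (hTx : UsesShapes T x) : ∃ c > 0, ∃ K : NNReal,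
    ∀ t : UTile x u φ, c ≤ (φ t.vec).2 ∧ |(φ t.vec).1| ≤ K * (φ t.vec).2 := by
  have hfin := (finite_range_vec (u := u) (φ := φ) hT hTx).image
    fun w => (φ w).2 / max 1 |(φ w).1|
  rw [← range_comp] at hfin
  obtain ⟨c, hc, hcle⟩ := (finite_singleton 0).exists_between' hfin <| by
    rintro _ rfl _ ⟨t, rfl⟩
    exact div_pos t.vec_pos (lt_max_of_lt_left one_pos)
  replace hc : 0 < c := hc 0 rfl
  refine ⟨c, hc, ⟨c⁻¹, inv_nonneg.2 hc.le⟩, fun t => ?_⟩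
  have ht : c * max 1 |(φ t.vec).1| ≤ (φ t.vec).2 :=
    ((lt_div_iff₀ (lt_max_of_lt_left one_pos)).1 (hcle _ (mem_range_self t))).le
  refine ⟨(le_mul_of_one_le_right hc.le (le_max_left _ _)).trans ht, ?_⟩
  exact (le_inv_mul_iff₀ hc).2 ((mul_le_mul_of_nonneg_left (le_max_right _ _) hc.le).trans ht)

theorem mem_support_iff_exists_mem_segment (hφ : φ u = (1, 0)) (t : UTile x u φ) {p : Pt} :
    p ∈ t.tile.support ↔ ∃ q ∈ segment ℝ (φ t.base) (φ (t.base + t.vec)),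
      q.2 = (φ p).2 ∧ (φ p).1 ∈ Icc q.1 (q.1 + 1) := by
  rw [mem_support_iff, segment_eq_image', map_add, add_sub_cancel_left]
  constructor
  · rintro ⟨a, b, ha, hb, rfl⟩
    refine ⟨_, mem_image_of_mem _ hb, by simp [hφ], ?_⟩
    simp only [map_add, map_smul, hφ, Prod.fst_add, Prod.smul_fst, smul_eq_mul]
    constructor <;> linarith [ha.1, ha.2]
  · rintro ⟨_, ⟨b, hb, rfl⟩, hsnd, hfst⟩
    refine ⟨(φ p).1 - (φ t.base + b • φ t.vec).1, b, ⟨sub_nonneg.2 hfst.1, ?_⟩, hb,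
      φ.injective (Prod.ext ?_ ?_)⟩
    · linarith [hfst.2]
    · simp only [map_add, map_smul, hφ, Prod.fst_add, Prod.smul_fst, smul_eq_mul]
      ring
    · simpa [hφ] using hsnd.symm

theorem exists_chainSupp_orbitTiles_eq_strip (hφ : φ u = (1, 0))
    (hN : ∀ t, (N t).base = t.base + t.vec) {c : ℝ} (hc : 0 < c) {K : NNReal}
    (hvec : ∀ t : UTile x u φ, c ≤ (φ t.vec).2 ∧ |(φ t.vec).1| ≤ K * (φ t.vec).2)
    (s : UTile x u φ) :
    ∃ f : ℝ → ℝ, LipschitzWith K f ∧ ChainSupp (orbitTiles N s) = strip φ f := by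
  let t : ℤ → UTile x u φ := fun n => (N ^ n) s
  have hbase : ∀ n, (t (n + 1)).base = (t n).base + (t n).vec := fun n => by
    rw [← hN, ← Equiv.Perm.mul_apply, ← zpow_one_add, add_comm]
  have hdiff : ∀ n, φ (t (n + 1)).base - φ (t n).base = φ (t n).vec := fun n => by
    rw [hbase, map_add, add_sub_cancel_left]
  obtain ⟨f, hf, hgraph⟩ := exists_lipschitzWith_polyline_eq_graph (A := fun n => φ (t n).base)
    (K := K) hc (fun n => by rw [← Prod.snd_sub, hdiff]; exact (hvec (t n)).1)
    (fun n => by rw [ConeLE, ← Prod.fst_sub, ← Prod.snd_sub, hdiff]; exact (hvec (t n)).2)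
  refine ⟨f, hf, ext fun p => ?_⟩
  have hmem : ∀ q : ℝ × ℝ,
      (∃ n, q ∈ segment ℝ (φ (t n).base) (φ (t (n + 1)).base)) ↔ q.1 = f q.2 := fun q =>
    mem_iUnion.symm.trans (Set.ext_iff.1 hgraph q)
  simp only [ChainSupp, ← range_tile_zpow, biUnion_range, mem_iUnion,
    mem_support_iff_exists_mem_segment hφ]
  constructor
  · rintro ⟨n, q, hq, hsnd, hfst⟩
    rw [← hbase] at hq
    rw [(hmem q).1 ⟨n, hq⟩, hsnd] at hfst
    exact hfst
  · intro hp
    obtain ⟨n, hn⟩ := (hmem (f (φ p).2, (φ p).2)).2 rfl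
    rw [hbase] at hn
    exact ⟨n, _, hn, rfl, hp⟩

end UTile

theorem IsParallelogramTiling.exists_chainSupp_eq_strip (hx : IsParallelogramTiling x)
    (hT : T.Finite) (hTx : UsesShapes T x) (hφ : φ u = (1, 0)) :
    ∃ (K : NNReal) (f : {C // IsChainSet x u C} → ℝ → ℝ), (∀ C, LipschitzWith K (f C)) ∧
      (∀ C : {C // IsChainSet x u C}, ChainSupp C = strip φ (f C)) ∧
      ∀ C D, C ≠ D → ∀ y, 1 ≤ |f C y - f D y| := by
  obtain ⟨N, hN⟩ :=
    UTile.exists_perm_base_eq_base_add_vec hx (hx.locallyFinite_support hT hTx) hφ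
  obtain ⟨c, hc, K, hvec⟩ := UTile.exists_slope_bound (x := x) (u := u) (φ := φ) hT hTx
  have horbit : ∀ C : {C // IsChainSet x u C}, ∃ s, C.1 = UTile.orbitTiles N s := by
    rintro ⟨_, c, rfl⟩
    exact UTile.exists_tiles_eq_orbitTiles hx hφ hN c
  choose s hs using horbit
  choose f hf hstrip using fun C => UTile.exists_chainSupp_orbitTiles_eq_strip hφ hN hc hvec (s C)
  simp only [← hs] at hstrip
  refine ⟨K, f, hf, hstrip, fun C D hne y => ?_⟩
  by_contra! hlt
  have hmeet := interior_strip_inter_strip_nonempty (φ := φ) (hf C).continuous (hf D).continuous hlt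
  rw [← hstrip, ← hstrip, hs, hs] at hmeet
  have hsub : ∀ s, UTile.orbitTiles N s ⊆ x := by
    rintro s _ ⟨t, -, rfl⟩
    exact t.mem
  have hshare := hx.inter_nonempty_of_interior_nonempty (hsub _) (hsub _) hmeet
  exact hne (Subtype.ext (by rw [hs, hs, UTile.orbitTiles_eq_of_inter_nonempty hφ hshare]))

theorem IsParallelogramTiling.exists_isChainSet_mem (hx : IsParallelogramTiling x)
    (hlf : LocallyFinite fun r : x => r.1.support) (hφ : φ u = (1, 0)) {r : Rhombus} (hr : r ∈ x)
    (hu : r.HasEdgeDir u) : ∃ C, IsChainSet x u C ∧ r ∈ C := by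
  obtain ⟨N, hN⟩ := UTile.exists_perm_base_eq_base_add_vec hx hlf hφ
  obtain ⟨a, v, hv⟩ := hu.exists_isReparam
  obtain ⟨t, rfl, -⟩ := UTile.exists_tile_eq hx hφ hr hv
  exact ⟨_, UTile.isChainSet_orbitTiles hx hφ hN t, mem_image_of_mem _ (.refl N t)⟩

end Strips

/-- Every disk of some fixed radius meets a tile with edge direction `u`. -/
def EdgeDirRelativelyDense (x : Set Rhombus) (u : Pt) : Prop :=
  ∃ R : ℝ, ∀ p : Pt, ∃ s ∈ x, s.HasEdgeDir u ∧ (s.support ∩ closedBall p R).Nonempty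

theorem UniformlyRecurrentIn.edgeDirRelativelyDense {x : Set Rhombus} {u : Pt} {r : Rhombus}
    (hr : UniformlyRecurrentIn r x) (hu : r.HasEdgeDir u) : EdgeDirRelativelyDense x u := by
  obtain ⟨R, -, hR⟩ := hr
  refine ⟨R, fun p => ?_⟩
  obtain ⟨s, hs, hsr, hsub⟩ := hR p
  exact ⟨s, hs, by rwa [Rhombus.HasEdgeDir, hsr.1, hsr.2], s.pos, s.pos_mem_support,
    hsub s.pos_mem_support⟩

theorem EdgeDirRelativelyDense.ne_zero {x : Set Rhombus} {u : Pt} (h : EdgeDirRelativelyDense x u)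
    (hx : IsParallelogramTiling x) : u ≠ 0 := by
  obtain ⟨R, hR⟩ := h
  obtain ⟨s, hs, hu, -⟩ := hR 0
  obtain ⟨a, v, hv⟩ := hu.exists_isReparam
  exact (hv.linearIndependent (hx.linearIndependent s hs)).ne_zero 0

theorem exists_chart_apply_eq {u : Pt} (hu : u ≠ 0) : ∃ φ : Pt ≃L[ℝ] ℝ × ℝ, φ u = (1, 0) := by
  let ψ : Pt ≃L[ℝ] ℝ × ℝ := .ofFinrankEq (by simp)
  obtain ⟨L, hL⟩ := SeparatingDual.exists_continuousLinearEquiv_apply_eq (R := ℝ)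
    (x := ψ u) (y := ((1, 0) : ℝ × ℝ)) (ψ.map_ne_zero_iff.2 hu) (by simp)
  exact ⟨ψ.trans L, hL⟩

theorem EdgeDirRelativelyDense.exists_abs_sub_le {x : Set Rhombus} {u : Pt}
    (h : EdgeDirRelativelyDense x u) (hx : IsParallelogramTiling x)
    (hlf : LocallyFinite fun r : x => r.1.support) {φ : Pt ≃L[ℝ] ℝ × ℝ} (hφ : φ u = (1, 0))
    {K : NNReal} {f : {C // IsChainSet x u C} → ℝ → ℝ} (hf : ∀ C, LipschitzWith K (f C))
    (hstrip : ∀ C : {C // IsChainSet x u C}, ChainSupp C = strip φ (f C)) :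
    ∃ R, ∀ b, ∃ C, |f C 0 - b| ≤ R := by
  obtain ⟨R, hR⟩ := h
  let M := ‖(φ : Pt →L[ℝ] ℝ × ℝ)‖ * R
  refine ⟨K * M + (M + 1), fun b => ?_⟩
  obtain ⟨s, hs, hu, p, hp, hpR⟩ := hR (φ.symm (b, 0))
  obtain ⟨C, hC, hsC⟩ := hx.exists_isChainSet_mem hlf hφ hs hu
  have hpC : p ∈ strip φ (f ⟨C, hC⟩) := hstrip ⟨C, hC⟩ ▸ mem_biUnion hsC hp
  have hM : ‖φ p - (b, 0)‖ ≤ M := by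
    rw [← φ.apply_symm_apply (b, 0), ← map_sub]
    exact (φ : Pt →L[ℝ] ℝ × ℝ).le_opNorm_of_le (mem_closedBall_iff_norm.1 hpR)
  have hfst : |(φ p).1 - b| ≤ M := (norm_fst_le _).trans hM
  have hsnd : |(φ p).2 - 0| ≤ M := (norm_snd_le _).trans hM
  have hlip := ((hf ⟨C, hC⟩).dist_le_mul 0 (φ p).2).trans
    (mul_le_mul_of_nonneg_left ((dist_comm _ _).trans_le hsnd) K.2)
  refine ⟨⟨C, hC⟩, (abs_sub_le _ (f ⟨C, hC⟩ (φ p).2) _).trans (add_le_add hlip ?_)⟩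
  rw [abs_le] at hfst ⊢
  constructor <;> linarith [hpC.1, hpC.2]

theorem statement_7_general {T x : Set Rhombus} (hT : T.Finite) (hx : IsParallelogramTiling x)
    (hTx : UsesShapes T x) {u : Pt} (hdense : EdgeDirRelativelyDense x u) :
    ∃ idx : {C : Set Rhombus // IsChainSet x u C} → ℤ,
      Function.Bijective idx ∧
      (∀ (p : Pt) (s t : ℝ) (C₁ C₂ : {C : Set Rhombus // IsChainSet x u C}),
        s < t → p + s • u ∈ ChainSupp C₁.val → p + t • u ∈ ChainSupp C₂.val →
        idx C₁ ≤ idx C₂) ∧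
      (∀ (p : Pt) (n : ℤ), ∃ (t : ℝ) (C : {C : Set Rhombus // IsChainSet x u C}),
        p + t • u ∈ ChainSupp C.val ∧ idx C = n) := by
  obtain ⟨φ, hφ⟩ := exists_chart_apply_eq (hdense.ne_zero hx)
  obtain ⟨K, f, hf, hstrip, hsep⟩ := hx.exists_chainSupp_eq_strip hT hTx hφ
  obtain ⟨R, hR⟩ :=
    hdense.exists_abs_sub_le hx (hx.locallyFinite_support hT hTx) hφ hf hstrip
  obtain ⟨e, he⟩ := exists_equiv_int_of_one_le_abs_sub (g := fun C => f C 0)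
    (hsep · · · 0)
    (not_bddAbove_iff.2 fun b => by
      obtain ⟨C, hC⟩ := hR (b + R + 1)
      exact ⟨_, mem_range_self C, by linarith [(abs_le.1 hC).1]⟩)
    (not_bddBelow_iff.2 fun b => by
      obtain ⟨C, hC⟩ := hR (b - R - 1)
      exact ⟨_, mem_range_self C, by linarith [(abs_le.1 hC).2]⟩)
  have hmem : ∀ (p : Pt) (t : ℝ) C, p + t • u ∈ ChainSupp C.1 ↔
      (φ p).1 + t ∈ Icc (f C (φ p).2) (f C (φ p).2 + 1) := fun p t C => by
    simp [hstrip, strip, hφ]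
  refine ⟨e, e.bijective, fun p s t C D hst hC hD => ?_, fun p n => ?_⟩
  · by_contra! hlt
    rw [he] at hlt
    have hne : D ≠ C := fun h => hlt.ne (by rw [h])
    have hlt' := lt_of_continuous_of_ne (hf D).continuous (hf C).continuous
      (fun y h => by linarith [hsep D C hne y, abs_eq_zero.2 (sub_eq_zero.2 h)]) hlt (φ p).2
    have habs := hsep D C hne (φ p).2
    rw [abs_of_neg (sub_neg.2 hlt')] at habs
    linarith [((hmem p s C).1 hC).1, ((hmem p t D).1 hD).2]
  · refine ⟨f (e.symm n) (φ p).2 - (φ p).1, e.symm n, (hmem _ _ _).2 ?_, e.apply_symm_apply n⟩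
    simp

/-- In an edge-to-edge rhombus tiling `x` with finitely many
shapes up to translation, if some rhombus with edge direction `u` is uniformly
recurrent in `x`, then the chains of normal vector `u` can be indexed by `ℤ` in
such a way that, starting from any point and moving along the direction `u`, one
crosses the `u`-chains in increasing order, and one crosses arbitrarily many
`u`-chains in both the `u` and `-u` directions (every index is crossed by every
line of direction `u`). -/
theorem statement_7 (T : Set Rhombus) (hTfin : T.Finite)
    (x : Set Rhombus) (hx : IsTilingOn T x)
    (u : Pt) (r₀ : Rhombus) (hdir : r₀.HasEdgeDir u)
    (hur : UniformlyRecurrentIn r₀ x) :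
    ∃ idx : {C : Set Rhombus // IsChainSet x u C} → ℤ,
      Function.Bijective idx ∧
      (∀ (p : Pt) (s t : ℝ) (C₁ C₂ : {C : Set Rhombus // IsChainSet x u C}),
        s < t → p + s • u ∈ ChainSupp C₁.val → p + t • u ∈ ChainSupp C₂.val →
        idx C₁ ≤ idx C₂) ∧
      (∀ (p : Pt) (n : ℤ), ∃ (t : ℝ) (C : {C : Set Rhombus // IsChainSet x u C}),
        p + t • u ∈ ChainSupp C.val ∧ idx C = n) := by
  exact statement_7_general hTfin hx.1.isParallelogramTiling hx.2 (hur.edgeDirRelativelyDense hdir)
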